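/- Let K be a nondegenerate compact convex subset of ℝ², and let x₁, x₂, x₃, x₄ be points appearing in clockwise (cyclic) order on the boundary of K. Let F be a compact subset of K. If x₁ and x₃ lie in the same connected component of F, and x₂ and x₄ lie in the same connected component of F, then all four points lie in a single connected component of F. -/

import Mathlib

/-!
Let `γ` have period `T`. Moving the parameters of a chord from `(u, v)` to `(v, u + T)` reverses
the chord, so a continuous logarithm `Θ (u, v)` of `γ u - γ v` changes by a constant `h` with
`exp h = -1`; once around the curve the change is `2 * h ≠ 0`.

Suppose that paths `α` from `γ t₁` to `γ t₃` and `β` from `γ t₂` to `γ t₄` in `K` do not meet. Then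
`α s - β t` has a continuous logarithm on the square of all `(s, t)`, and its increments along the
four sides of the square add up to zero. On each side one of the two points rests at some `γ tᵢ`
while the other moves in `K`, so the difference stays in a half-plane bounded by the direction of a
supporting line at `γ tᵢ`. There the increment depends only on the end values, hence equals that of
a chord whose other end runs along `γ`. The four chord increments add up to `2 * h`: contradiction.

Two disjoint compact connected subsets of `K` have disjoint thickenings, in which their points can
be joined by polygonal paths; these stay in `K` by convexity.
-/

open Set Complex Function Metric

section BranchesOfLog

variable {X Y : Type*} [TopologicalSpace X] [TopologicalSpace Y] {s : Set X} {s' : Set Y}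

theorem sub_eq_log_exp_sub_log_exp {f : X → ℂ} (hs : IsPreconnected s) (hf : ContinuousOn f s)
    (hre : ∀ x ∈ s, 0 ≤ (exp (f x)).re) {x y : X} (hx : x ∈ s) (hy : y ∈ s) :
    f x - f y = log (exp (f x)) - log (exp (f y)) := by
  have hslit : ∀ z ∈ s, exp (f z) ∈ slitPlane := fun z hz ↦
    (hre z hz).lt_or_eq.imp id fun h him ↦ exp_ne_zero (f z) (Complex.ext h.symm him)
  have hexp (z : X) : exp (f z - log (exp (f z))) = 1 := by
    rw [exp_sub, exp_log (exp_ne_zero _), div_self (exp_ne_zero _)]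
  have hconst : f x - log (exp (f x)) = f y - log (exp (f y)) :=
    isCoveringMap_exp.constOn_of_comp hs (g := fun z ↦ f z - log (exp (f z)))
      (hf.sub (hf.cexp.clog hslit))
      (fun a _ b _ ↦ Subtype.ext ((hexp a).trans (hexp b).symm)) hx hy
  linear_combination hconst

theorem sub_eq_sub_of_exp_mem_halfPlane {f : X → ℂ} {g : Y → ℂ} {c : ℂ} (hc : c ≠ 0)
    (hs : IsPreconnected s) (hf : ContinuousOn f s) (hfc : ∀ x ∈ s, 0 ≤ (c * exp (f x)).re)
    (hs' : IsPreconnected s') (hg : ContinuousOn g s') (hgc : ∀ y ∈ s', 0 ≤ (c * exp (g y)).re)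
    {x₀ x₁ : X} {y₀ y₁ : Y} (hx₀ : x₀ ∈ s) (hx₁ : x₁ ∈ s) (hy₀ : y₀ ∈ s') (hy₁ : y₁ ∈ s')
    (h₀ : exp (f x₀) = exp (g y₀)) (h₁ : exp (f x₁) = exp (g y₁)) :
    f x₁ - f x₀ = g y₁ - g y₀ := by
  have hexp (z : ℂ) : exp (log c + z) = c * exp z := by rw [exp_add, exp_log hc]
  have hf' := sub_eq_log_exp_sub_log_exp (f := fun x ↦ log c + f x) hs (continuousOn_const.add hf)
    (fun x hx ↦ (hexp (f x)).symm ▸ hfc x hx) hx₁ hx₀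
  have hg' := sub_eq_log_exp_sub_log_exp (f := fun y ↦ log c + g y) hs' (continuousOn_const.add hg)
    (fun y hy ↦ (hexp (g y)).symm ▸ hgc y hy) hy₁ hy₀
  simp only [hexp, h₀, h₁, add_sub_add_left_eq_sub] at hf' hg'
  rw [hf', hg']

theorem exists_continuousOn_exp_eq_of_convex {E : Type*} [AddCommGroup E] [Module ℝ E]
    [TopologicalSpace E] [IsTopologicalAddGroup E] [ContinuousSMul ℝ E] [LocallyConvexSpace ℝ E]
    {U : Set E} (hU : Convex ℝ U) (hUo : IsOpen U) {g : E → ℂ} (hg : ContinuousOn g U)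
    (hg₀ : ∀ x ∈ U, g x ≠ 0) :
    ∃ f : E → ℂ, ContinuousOn f U ∧ ∀ x ∈ U, exp (f x) = g x := by
  rcases U.eq_empty_or_nonempty with rfl | hne
  · exact ⟨0, continuousOn_empty _, by simp⟩
  · have := hU.contractibleSpace hne
    have hUs : IsSimplyConnected U := inferInstanceAs (SimplyConnectedSpace U)
    exact exists_continuousOn_eqOn_exp_comp hUs hUo hg fun ⟨x, hx, hgx⟩ ↦ hg₀ x hx hgx

end BranchesOfLog

theorem ne_of_periodic_of_injOn_Ico {α β : Type*} [AddCommGroup α] [LinearOrder α]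
    [IsOrderedAddMonoid α] [Archimedean α] {f : α → β} {T a u v : α} (hf : Periodic f T)
    (hinj : InjOn f (Ico a (a + T))) (huv : u < v) (hvu : v < u + T) : f u ≠ f v := by
  have hT : 0 < T := pos_of_lt_add_right (huv.trans hvu)
  have hmod (w : α) : f (toIcoMod hT a w) = f w := hf.sub_zsmul_eq _
  intro h
  obtain ⟨n, hn⟩ := (toIcoMod_eq_toIcoMod hT).1 <|
    hinj (toIcoMod_mem_Ico hT a u) (toIcoMod_mem_Ico hT a v) (by rw [hmod, hmod, h])
  have hpos : 0 < n := (zsmul_lt_zsmul_iff_left hT).1 <| by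
    rwa [zero_zsmul, ← hn, sub_pos]
  have hlt : n < 1 := (zsmul_lt_zsmul_iff_left hT).1 <| by
    rwa [one_zsmul, ← hn, sub_lt_iff_lt_add']
  lia

/-- The set `K` lies in a closed half-plane whose boundary line passes through `x`. The half-plane
is encoded as `{z | 0 ≤ (c * (x - z)).re}`, so that `conj c` is an outer normal vector. -/
def HasSupportingHalfPlane (K : Set ℂ) (x : ℂ) : Prop :=
  ∃ c : ℂ, c ≠ 0 ∧ ∀ z ∈ K, 0 ≤ (c * (x - z)).re

theorem hasSupportingHalfPlane_of_convex {K : Set ℂ} (hK : Convex ℝ K)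
    (hKne : (interior K).Nonempty) {x : ℂ} (hx : x ∉ interior K) : HasSupportingHalfPlane K x := by
  obtain ⟨f, hf₀, hf⟩ :=
    RCLike.geometric_hahn_banach_of_nonempty_interior_point (𝕜 := ℂ) hK hx hKne
  have hf_apply (z : ℂ) : f z = f 1 * z := by
    rw [mul_comm, ← smul_eq_mul, ← map_smul, smul_eq_mul, mul_one]
  refine ⟨f 1, fun h ↦ hf₀ (ContinuousLinearMap.ext fun z ↦ by simp [hf_apply z, h]),
    fun z hz ↦ ?_⟩
  rw [← hf_apply, map_sub, sub_re]
  exact sub_nonneg.2 (hf z hz)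

/-- The pairs of parameters of the nondegenerate chords of a closed curve of period `T`, the second
parameter following the first within one period. -/
def chordStrip (T : ℝ) : Set (ℝ × ℝ) := (fun p ↦ p.2 - p.1) ⁻¹' Ioo 0 T

theorem mem_chordStrip {T u v : ℝ} : (u, v) ∈ chordStrip T ↔ u < v ∧ v < u + T := by
  simp only [chordStrip, mem_preimage, mem_Ioo, sub_pos, sub_lt_iff_lt_add']

theorem isOpen_chordStrip (T : ℝ) : IsOpen (chordStrip T) :=
  isOpen_Ioo.preimage (by fun_prop)

theorem convex_chordStrip (T : ℝ) : Convex ℝ (chordStrip T) :=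
  (convex_Ioo 0 T).linear_preimage (LinearMap.snd ℝ ℝ ℝ - LinearMap.fst ℝ ℝ ℝ)

theorem halfTurn_mem_chordStrip {T u v : ℝ} (h : (u, v) ∈ chordStrip T) :
    (v, u + T) ∈ chordStrip T :=
  mem_chordStrip.2 ⟨(mem_chordStrip.1 h).2, add_lt_add_left (mem_chordStrip.1 h).1 T⟩

/-- `Θ` is a continuous branch of the logarithm of the chord `γ u - γ v`, over the strip of
parameters `(u, v)` of the nondegenerate chords of the curve `γ` of period `T`. -/
structure IsChordLog (γ : ℝ → ℂ) (T : ℝ) (Θ : ℝ × ℝ → ℂ) : Prop where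
  continuousOn : ContinuousOn Θ (chordStrip T)
  exp_eq {u v : ℝ} : (u, v) ∈ chordStrip T → exp (Θ (u, v)) = γ u - γ v

theorem exists_isChordLog {γ : ℝ → ℂ} {a T : ℝ} (hγ : Continuous γ) (hper : Periodic γ T)
    (hinj : InjOn γ (Ico a (a + T))) : ∃ Θ, IsChordLog γ T Θ := by
  obtain ⟨Θ, hΘ, hexp⟩ := exists_continuousOn_exp_eq_of_convex (convex_chordStrip T)
    (isOpen_chordStrip T) (g := fun p ↦ γ p.1 - γ p.2) (by fun_prop) fun p hp ↦
      have ⟨h₁, h₂⟩ := mem_chordStrip.1 hp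
      sub_ne_zero.2 (ne_of_periodic_of_injOn_Ico hper hinj h₁ h₂)
  exact ⟨Θ, hΘ, fun h ↦ hexp _ h⟩

namespace IsChordLog

variable {γ : ℝ → ℂ} {T : ℝ} {Θ : ℝ × ℝ → ℂ}

theorem exists_halfTurn_eq_add (hΘ : IsChordLog γ T Θ) (hper : Periodic γ T) (hT : 0 < T) :
    ∃ h : ℂ, exp h = -1 ∧ ∀ u v, (u, v) ∈ chordStrip T → Θ (v, u + T) = Θ (u, v) + h := by
  have hexp : ∀ p ∈ chordStrip T, exp (Θ (p.2, p.1 + T) - Θ p) = -1 := fun (u, v) hp ↦ by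
    have hne : γ u - γ v ≠ 0 := hΘ.exp_eq hp ▸ exp_ne_zero _
    rw [exp_sub, hΘ.exp_eq (halfTurn_mem_chordStrip hp), hΘ.exp_eq hp, hper, ← neg_sub (γ u),
      neg_div, div_self hne]
  have hcont : ContinuousOn (fun p ↦ Θ (p.2, p.1 + T) - Θ p) (chordStrip T) :=
    (hΘ.continuousOn.comp (by fun_prop) fun _ hp ↦ halfTurn_mem_chordStrip hp).sub hΘ.continuousOn
  have hmid : ((0 : ℝ), T / 2) ∈ chordStrip T :=
    mem_chordStrip.2 ⟨half_pos hT, by rw [zero_add]; exact half_lt_self hT⟩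
  refine ⟨_, hexp _ hmid, fun u v huv ↦ eq_add_of_sub_eq' ?_⟩
  exact isCoveringMap_exp.constOn_of_comp (convex_chordStrip T).isPreconnected hcont
    (fun p hp q hq ↦ Subtype.ext ((hexp p hp).trans (hexp q hq).symm)) huv hmid

theorem sub_eq_sub_of_hasSupportingHalfPlane (hΘ : IsChordLog γ T Θ) {K : Set ℂ}
    (hγK : ∀ t, γ t ∈ K) {u v w : ℝ} (hsupp : HasSupportingHalfPlane K (γ u))
    (hv : (u, v) ∈ chordStrip T) (hw : (u, w) ∈ chordStrip T) {Y : Type*} [TopologicalSpace Y]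
    [PreconnectedSpace Y] {δ M : Y → ℂ} (hδK : ∀ y, δ y ∈ K) (hM : Continuous M)
    (hMexp : ∀ y, exp (M y) = γ u - δ y) {y₀ y₁ : Y} (hy₀ : δ y₀ = γ v) (hy₁ : δ y₁ = γ w) :
    Θ (u, w) - Θ (u, v) = M y₁ - M y₀ := by
  obtain ⟨c, hc, hcK⟩ := hsupp
  have hslice (t : ℝ) : t ∈ Ioo u (u + T) ↔ (u, t) ∈ chordStrip T := mem_chordStrip.symm
  exact sub_eq_sub_of_exp_mem_halfPlane (f := fun t ↦ Θ (u, t)) hc isPreconnected_Ioo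
    (hΘ.continuousOn.comp (by fun_prop) fun t ht ↦ (hslice t).1 ht)
    (fun t ht ↦ by rw [hΘ.exp_eq ((hslice t).1 ht)]; exact hcK _ (hγK t))
    isPreconnected_univ hM.continuousOn (fun y _ ↦ by rw [hMexp]; exact hcK _ (hδK y))
    ((hslice v).2 hv) ((hslice w).2 hw) (mem_univ y₀) (mem_univ y₁)
    (by rw [hΘ.exp_eq hv, hMexp, hy₀]) (by rw [hΘ.exp_eq hw, hMexp, hy₁])

end IsChordLog

theorem exists_continuous_exp_eq_path_sub {x x' y y' : ℂ} (α : Path x x') (β : Path y y')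
    (hne : ∀ s t, α s ≠ β t) :
    ∃ L : ℝ × ℝ → ℂ, Continuous L ∧ ∀ s t, exp (L (s, t)) = α.extend s - β.extend t := by
  obtain ⟨L, hL, hexp⟩ := exists_continuousOn_exp_eq_of_convex convex_univ isOpen_univ
    (g := fun p : ℝ × ℝ ↦ α.extend p.1 - β.extend p.2) (by fun_prop)
    fun _ _ ↦ sub_ne_zero.2 (hne _ _)
  exact ⟨L, continuousOn_univ.1 hL, fun s t ↦ hexp (s, t) (mem_univ _)⟩

theorem exists_path_eq_of_hasSupportingHalfPlane {K : Set ℂ} {γ : ℝ → ℂ} {a T : ℝ}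
    (hγ : Continuous γ) (hper : Periodic γ T) (hinj : InjOn γ (Ico a (a + T)))
    (hγK : ∀ t, γ t ∈ K) (hsupp : ∀ t, HasSupportingHalfPlane K (γ t))
    {t₁ t₂ t₃ t₄ : ℝ} (h₁₂ : t₁ < t₂) (h₂₃ : t₂ < t₃) (h₃₄ : t₃ < t₄) (h₄₁ : t₄ < t₁ + T)
    (α : Path (γ t₁) (γ t₃)) (β : Path (γ t₂) (γ t₄)) (hα : ∀ s, α s ∈ K) (hβ : ∀ t, β t ∈ K) :
    ∃ s t, α s = β t := by
  by_contra! hne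
  obtain ⟨Θ, hΘ⟩ := exists_isChordLog hγ hper hinj
  obtain ⟨h, hexp, hturn⟩ := hΘ.exists_halfTurn_eq_add hper (by linarith)
  obtain ⟨L, hL, hLexp⟩ := exists_continuous_exp_eq_path_sub α β hne
  have hLexp' (s t : ℝ) : exp (L (s, t) + h) = β.extend t - α.extend s := by
    rw [exp_add, hLexp, hexp, mul_neg_one, neg_sub]
  have hα (s : ℝ) : α.extend s ∈ K := hα _
  have hβ (t : ℝ) : β.extend t ∈ K := hβ _
  have m₁₂ : (t₁, t₂) ∈ chordStrip T := mem_chordStrip.2 ⟨h₁₂, by linarith⟩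
  have m₁₄ : (t₁, t₄) ∈ chordStrip T := mem_chordStrip.2 ⟨by linarith, h₄₁⟩
  have m₂₃ : (t₂, t₃) ∈ chordStrip T := mem_chordStrip.2 ⟨h₂₃, by linarith⟩
  have m₃₄ : (t₃, t₄) ∈ chordStrip T := mem_chordStrip.2 ⟨h₃₄, by linarith⟩
  have side₁ : Θ (t₁, t₄) - Θ (t₁, t₂) = L (0, 1) - L (0, 0) :=
    hΘ.sub_eq_sub_of_hasSupportingHalfPlane hγK (hsupp t₁) m₁₂ m₁₄ hβ
      (M := fun t ↦ L (0, t)) (by fun_prop) (by simp [hLexp]) β.extend_zero β.extend_one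
  have side₂ : Θ (t₂, t₃) - Θ (t₂, t₁ + T) = L (1, 0) + h - (L (0, 0) + h) :=
    hΘ.sub_eq_sub_of_hasSupportingHalfPlane hγK (hsupp t₂) (halfTurn_mem_chordStrip m₁₂) m₂₃ hα
      (M := fun s ↦ L (s, 0) + h) (by fun_prop) (by simp [hLexp'])
      (by simp [hper t₁]) α.extend_one
  have side₃ : Θ (t₃, t₂ + T) - Θ (t₃, t₄) = L (1, 0) - L (1, 1) :=
    hΘ.sub_eq_sub_of_hasSupportingHalfPlane hγK (hsupp t₃) m₃₄ (halfTurn_mem_chordStrip m₂₃) hβ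
      (M := fun t ↦ L (1, t)) (by fun_prop) (by simp [hLexp]) β.extend_one (by simp [hper t₂])
  have side₄ : Θ (t₄, t₃ + T) - Θ (t₄, t₁ + T) = L (1, 1) + h - (L (0, 1) + h) :=
    hΘ.sub_eq_sub_of_hasSupportingHalfPlane hγK (hsupp t₄) (halfTurn_mem_chordStrip m₁₄)
      (halfTurn_mem_chordStrip m₃₄) hα (M := fun s ↦ L (s, 1) + h) (by fun_prop)
      (by simp [hLexp']) (by simp [hper t₁]) (by simp [hper t₃])
  rw [hturn _ _ m₁₂] at side₂
  rw [hturn _ _ m₂₃] at side₃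
  rw [hturn _ _ m₁₄, hturn _ _ m₃₄] at side₄
  have hzero : h = 0 := by linear_combination (side₁ - side₂ + side₃ + side₄) / 2
  norm_num [hzero] at hexp

theorem joinedIn_inter_thickening_of_isPreconnected {E : Type*} [SeminormedAddCommGroup E]
    [NormedSpace ℝ E] {K C : Set E} (hK : Convex ℝ K) (hC : IsPreconnected C) (hCK : C ⊆ K)
    {δ : ℝ} (hδ : 0 < δ) {x y : E} (hx : x ∈ C) (hy : y ∈ C) :
    JoinedIn (K ∩ thickening δ C) x y := by
  refine hC.induction₂ (JoinedIn (K ∩ thickening δ C)) (fun a ha ↦ ?_)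
    (fun _ _ _ _ _ _ ↦ JoinedIn.trans) (fun _ _ _ _ ↦ JoinedIn.symm) hx hy
  filter_upwards [self_mem_nhdsWithin, mem_nhdsWithin_of_mem_nhds (ball_mem_nhds a hδ)]
    with b hbC hba
  refine JoinedIn.of_segment_subset
    (subset_inter (hK.segment_subset (hCK ha) (hCK hbC)) ?_)
  exact ((convex_ball a δ).segment_subset (mem_ball_self hδ) hba).trans
    (ball_subset_thickening ha δ)

theorem exists_paths_ne_of_disjoint_isPreconnected {E : Type*} [SeminormedAddCommGroup E]
    [NormedSpace ℝ E] {K C D : Set E} (hK : Convex ℝ K) (hC : IsPreconnected C)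
    (hD : IsPreconnected D) (hCK : C ⊆ K) (hDK : D ⊆ K) (hCc : IsCompact C) (hDc : IsClosed D)
    (hCD : Disjoint C D) {x x' y y' : E} (hx : x ∈ C) (hx' : x' ∈ C) (hy : y ∈ D) (hy' : y' ∈ D) :
    ∃ (α : Path x x') (β : Path y y'),
      (∀ s, α s ∈ K) ∧ (∀ t, β t ∈ K) ∧ ∀ s t, α s ≠ β t := by
  obtain ⟨δ, hδ, hthick⟩ := hCD.exists_thickenings hCc hDc
  obtain ⟨α, hα⟩ := joinedIn_inter_thickening_of_isPreconnected hK hC hCK hδ hx hx'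
  obtain ⟨β, hβ⟩ := joinedIn_inter_thickening_of_isPreconnected hK hD hDK hδ hy hy'
  exact ⟨α, β, fun s ↦ (hα s).1, fun t ↦ (hβ t).1,
    fun s t ↦ hthick.ne_of_mem (hα s).2 (hβ t).2⟩

theorem isClosed_connectedComponentIn {X : Type*} [TopologicalSpace X] {F : Set X}
    (hF : IsClosed F) (x : X) : IsClosed (connectedComponentIn F x) := by
  by_cases hx : x ∈ F
  · exact isClosed_of_closure_subset <|
      isPreconnected_connectedComponentIn.closure.subset_connectedComponentIn
        (subset_closure (mem_connectedComponentIn hx))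
        (closure_minimal (connectedComponentIn_subset F x) hF)
  · simp only [connectedComponentIn_eq_empty hx, isClosed_empty]

section ConvexRegion

variable {E : Type*} [NormedAddCommGroup E] [NormedSpace ℝ E] {K : Set E} {γ : ℝ → E}
  {a T t₁ t₂ t₃ t₄ : ℝ}

theorem exists_path_eq_of_convex (hE : Module.finrank ℝ E = 2) (hK : Convex ℝ K)
    (hKne : (interior K).Nonempty) (hγ : Continuous γ) (hper : Periodic γ T)
    (hinj : InjOn γ (Ico a (a + T))) (hγK : ∀ t, γ t ∈ K \ interior K)
    (h₁₂ : t₁ < t₂) (h₂₃ : t₂ < t₃) (h₃₄ : t₃ < t₄) (h₄₁ : t₄ < t₁ + T)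
    (α : Path (γ t₁) (γ t₃)) (β : Path (γ t₂) (γ t₄)) (hα : ∀ s, α s ∈ K) (hβ : ∀ t, β t ∈ K) :
    ∃ s t, α s = β t := by
  have : FiniteDimensional ℝ E := Module.finite_of_finrank_eq_succ hE
  let e : E ≃L[ℝ] ℂ := .ofFinrankEq (hE.trans finrank_real_complex.symm)
  have hint : interior (e '' K) = e '' interior K := (e.toHomeomorph.image_interior K).symm
  obtain ⟨s, t, hst⟩ := exists_path_eq_of_hasSupportingHalfPlane (K := e '' K) (γ := e ∘ γ)
    (e.continuous.comp hγ) (hper.comp e) (e.injective.comp_injOn hinj)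
    (fun t ↦ mem_image_of_mem e (hγK t).1)
    (fun t ↦ hasSupportingHalfPlane_of_convex (hK.linear_image e.toLinearMap)
      (hint ▸ hKne.image e) (hint ▸ fun h ↦ (hγK t).2 (e.injective.mem_set_image.1 h)))
    h₁₂ h₂₃ h₃₄ h₄₁ (α.map e.continuous) (β.map e.continuous)
    (fun s ↦ mem_image_of_mem e (hα s)) (fun t ↦ mem_image_of_mem e (hβ t))
  exact ⟨s, t, e.injective hst⟩

theorem inter_nonempty_of_isPreconnected_of_convex (hE : Module.finrank ℝ E = 2)
    (hK : Convex ℝ K) (hKne : (interior K).Nonempty) (hγ : Continuous γ) (hper : Periodic γ T)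
    (hinj : InjOn γ (Ico a (a + T))) (hγK : ∀ t, γ t ∈ K \ interior K)
    (h₁₂ : t₁ ≤ t₂) (h₂₃ : t₂ ≤ t₃) (h₃₄ : t₃ ≤ t₄) (h₄₁ : t₄ < t₁ + T) {C D : Set E}
    (hC : IsPreconnected C) (hD : IsPreconnected D) (hCK : C ⊆ K) (hDK : D ⊆ K)
    (hCc : IsCompact C) (hDc : IsClosed D) (hC₁ : γ t₁ ∈ C) (hC₃ : γ t₃ ∈ C) (hD₂ : γ t₂ ∈ D)
    (hD₄ : γ t₄ ∈ D) : (C ∩ D).Nonempty := by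
  by_contra hCD
  rw [← not_disjoint_iff_nonempty_inter, not_not] at hCD
  have ne_of_mem {s t : ℝ} (hs : γ s ∈ C) (ht : γ t ∈ D) : s ≠ t :=
    fun h ↦ hCD.ne_of_mem hs ht (congrArg γ h)
  obtain ⟨α, β, hα, hβ, hne⟩ := exists_paths_ne_of_disjoint_isPreconnected hK hC hD hCK hDK
    hCc hDc hCD hC₁ hC₃ hD₂ hD₄
  obtain ⟨s, t, hst⟩ := exists_path_eq_of_convex hE hK hKne hγ hper hinj hγK
    (h₁₂.lt_of_ne (ne_of_mem hC₁ hD₂)) (h₂₃.lt_of_ne (ne_of_mem hC₃ hD₂).symm)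
    (h₃₄.lt_of_ne (ne_of_mem hC₃ hD₄)) h₄₁ α β hα hβ
  exact hne s t hst

theorem stmt_2_general (hE : Module.finrank ℝ E = 2) (hK : Convex ℝ K)
    (hKne : (interior K).Nonempty) (hγ : Continuous γ) (hper : Periodic γ T)
    (hinj : InjOn γ (Ico a (a + T))) (hγK : ∀ t, γ t ∈ K \ interior K)
    (h₁₂ : t₁ ≤ t₂) (h₂₃ : t₂ ≤ t₃) (h₃₄ : t₃ ≤ t₄) (h₄₁ : t₄ < t₁ + T) {F : Set E}
    (hFK : F ⊆ K) (hF : IsCompact F) (h₁₃ : γ t₃ ∈ connectedComponentIn F (γ t₁))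
    (h₂₄ : γ t₄ ∈ connectedComponentIn F (γ t₂)) :
    connectedComponentIn F (γ t₁) = connectedComponentIn F (γ t₂) := by
  have hsub (x : E) := connectedComponentIn_subset F x
  have hclosed := isClosed_connectedComponentIn hF.isClosed
  have base_mem {x y : E} (h : y ∈ connectedComponentIn F x) : x ∈ connectedComponentIn F x :=
    mem_connectedComponentIn (connectedComponentIn_nonempty_iff.1 ⟨y, h⟩)
  obtain ⟨z, hz₁, hz₂⟩ := inter_nonempty_of_isPreconnected_of_convex hE hK hKne hγ hper hinj hγK
    h₁₂ h₂₃ h₃₄ h₄₁ isPreconnected_connectedComponentIn isPreconnected_connectedComponentIn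
    ((hsub _).trans hFK) ((hsub _).trans hFK) (hF.of_isClosed_subset (hclosed _) (hsub _))
    (hclosed _) (base_mem h₁₃) h₁₃ (base_mem h₂₄) h₂₄
  exact (connectedComponentIn_eq hz₁).trans (connectedComponentIn_eq hz₂).symm

end ConvexRegion

/-- four points in cyclic order on the boundary of a nondegenerate compact
convex set `K ⊆ ℝ²`, pairwise-oppositely connected in a compact `F ⊆ K`, all lie in one
connected component of `F`. The boundary is parametrized by a continuous, 1-periodic map
`γ` injective on a period, and cyclic order means `t₁ ≤ t₂ ≤ t₃ ≤ t₄ < t₁ + 1`. -/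
theorem stmt_2 (K F : Set (ℝ × ℝ)) (hKcomp : IsCompact K) (hKconv : Convex ℝ K)
    (hKnd : (interior K).Nonempty) (hFK : F ⊆ K) (hFcomp : IsCompact F)
    (γ : ℝ → ℝ × ℝ) (hγcont : Continuous γ) (hγper : Function.Periodic γ 1)
    (hγrange : Set.range γ = frontier K) (hγinj : Set.InjOn γ (Set.Ico 0 1))
    (t₁ t₂ t₃ t₄ : ℝ) (h12 : t₁ ≤ t₂) (h23 : t₂ ≤ t₃) (h34 : t₃ ≤ t₄) (hcyc : t₄ < t₁ + 1)
    (x₁ x₂ x₃ x₄ : ℝ × ℝ)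
    (hx₁ : x₁ = γ t₁) (hx₂ : x₂ = γ t₂) (hx₃ : x₃ = γ t₃) (hx₄ : x₄ = γ t₄)
    (hx₁F : x₁ ∈ F) (hx₂F : x₂ ∈ F) (hx₃F : x₃ ∈ F) (hx₄F : x₄ ∈ F)
    (h13 : connectedComponentIn F x₁ = connectedComponentIn F x₃)
    (h24 : connectedComponentIn F x₂ = connectedComponentIn F x₄) :
    connectedComponentIn F x₁ = connectedComponentIn F x₂ ∧
      connectedComponentIn F x₁ = connectedComponentIn F x₃ ∧
      connectedComponentIn F x₁ = connectedComponentIn F x₄ := by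
  subst hx₁ hx₂ hx₃ hx₄
  have hγK (t : ℝ) : γ t ∈ K \ interior K :=
    hKcomp.isClosed.frontier_eq ▸ hγrange ▸ mem_range_self t
  have h₁₂ : connectedComponentIn F (γ t₁) = connectedComponentIn F (γ t₂) :=
    stmt_2_general (a := 0) (by simp) hKconv hKnd hγcont hγper (by rwa [zero_add]) hγK
      h12 h23 h34 hcyc hFK hFcomp (h13 ▸ mem_connectedComponentIn hx₃F)
      (h24 ▸ mem_connectedComponentIn hx₄F)
  exact ⟨h₁₂, h13, h₁₂.trans h24⟩
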